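/- arXiv:2503.01663 — 2 statements merged into one kernel-verified Lean document; each statement's English description precedes it below -/
import Mathlib

section
/- Let H = {1,…,m} be a finite set of voters, L = {1,…,n} a finite set of elections, P a finite set of parties, and t : H → P an assignment of each voter to the party they always vote for. Fix a party s ∈ P, and for each election l ∈ L let f_l be a function from the power set of H to [0,1] (the probability that party s wins election l given the set of votes cast) such that f_l is increasing at every h with t(h) = s and decreasing at every h with t(h) ≠ s. Let p = (p₁,…,p_m) ∈ [0,1]^m be the voters' turnout probabilities, and let Π and Π′ be staggered polling schedules (tuples of partitions of L, one partition per voter) with Π′ coarser than Π. Then the probability that party s sweeps all n elections satisfies E(Π′,p,F) ≥ E(Π,p,F), where F = (f₁,…,f_n). -/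
open Finset

/-- Weight of a block `M` of a partition relative to a turnout set `S`. -/
def blockWeight {n : ℕ} (p : ℝ) (M S : Finset (Fin n)) : ℝ :=
  if M ⊆ S then p else if M ∩ S = ∅ then 1 - p else 0

/-- The measure `μ_{π,p}` on subsets of `L = Fin n`. -/
def partMeasure {n : ℕ} (pt : Finpartition (univ : Finset (Fin n))) (p : ℝ)
    (S : Finset (Fin n)) : ℝ :=
  ∏ M ∈ pt.parts, blockWeight p M S

/-- `L_h(T) = {l : (h,l) ∈ T}`. -/
def Lh {m n : ℕ} (h : Fin m) (T : Finset (Fin m × Fin n)) : Finset (Fin n) :=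
  univ.filter fun l => (h, l) ∈ T

/-- `H_l(T) = {h : (h,l) ∈ T}`. -/
def Hl {m n : ℕ} (l : Fin n) (T : Finset (Fin m × Fin n)) : Finset (Fin m) :=
  univ.filter fun h => (h, l) ∈ T

/-- The measure `μ_{Π,p}` on subsets of `H × L`. -/
def schedMeasure {m n : ℕ} (Sch : Fin m → Finpartition (univ : Finset (Fin n)))
    (p : Fin m → ℝ) (T : Finset (Fin m × Fin n)) : ℝ :=
  ∏ h, partMeasure (Sch h) (p h) (Lh h T)

/-- `E(Π, p, F)`. -/
def schedExp {m n : ℕ} (Sch : Fin m → Finpartition (univ : Finset (Fin n)))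
    (p : Fin m → ℝ) (F : Fin n → Finset (Fin m) → ℝ) : ℝ :=
  ∑ T : Finset (Fin m × Fin n), (∏ l, F l (Hl l T)) * schedMeasure Sch p T

def IncreasingAt {m : ℕ} (f : Finset (Fin m) → ℝ) (h : Fin m) : Prop :=
  ∀ S : Finset (Fin m), f S ≤ f (insert h S)

def DecreasingAt {m : ℕ} (f : Finset (Fin m) → ℝ) (h : Fin m) : Prop :=
  ∀ S : Finset (Fin m), f (insert h S) ≤ f S

def Aligned {m n : ℕ} (F : Fin n → Finset (Fin m) → ℝ) : Prop :=
  ∀ h : Fin m, (∀ l, IncreasingAt (F l) h) ∨ (∀ l, DecreasingAt (F l) h)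

/-- `Sch'` is coarser than `Sch`. -/
def Coarser {m n : ℕ} (Sch' Sch : Fin m → Finpartition (univ : Finset (Fin n))) : Prop :=
  ∀ h, ∀ M ∈ (Sch h).parts, ∃ M' ∈ (Sch' h).parts, M ⊆ M'

/-- Product Bernoulli measure on subsets of `H = Fin m`. -/
def bern {m : ℕ} (p : Fin m → ℝ) (S : Finset (Fin m)) : ℝ :=
  (∏ h ∈ S, p h) * ∏ h ∈ Sᶜ, (1 - p h)

/-- Expectation with respect to the product Bernoulli measure. -/
def bernExp {m : ℕ} (p : Fin m → ℝ) (f : Finset (Fin m) → ℝ) : ℝ :=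
  ∑ S : Finset (Fin m), f S * bern p S

/-!
A schedule weight is a product over the voters, so the schedules can be exchanged one voter at a
time. With the other voters' turnout fixed, the probability of a sweep is `∏ l, c l`, where `c l`
is one of two constants according to whether the remaining voter `h` votes in election `l`. Its
mean factors over the blocks of the partition of `h`, a block `M` contributing
`p * ∏ l ∈ M, b l + (1 - p) * ∏ l ∈ M, a l`, where `b` and `a` are the constants with and without
the vote. Party loyalty makes `a` and `b` comparable for all elections at once, so by Chebyshev's
inequality merging blocks increases the product of these factors.
-/

section ProductWeights

variable {ι R : Type*} [DecidableEq ι] {β : ι → Type*}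

theorem update_piSplitAt_symm (i : ι) (x y : β i) (σ : ∀ j : {j // j ≠ i}, β j) :
    Function.update ((Equiv.piSplitAt i β).symm (y, σ)) i x
      = (Equiv.piSplitAt i β).symm (x, σ) := by
  ext j
  obtain rfl | hj := eq_or_ne j i
  · simp
  · simp [hj]

variable [Fintype ι] [∀ i, Fintype (β i)] [CommSemiring R]

theorem sum_mul_prod_eq_sum_piSplitAt (w : ∀ i, β i → R) (Φ : (∀ i, β i) → R) (i : ι) :
    ∑ τ, Φ τ * ∏ j, w j (τ j)
      = ∑ σ : ∀ j : {j // j ≠ i}, β j,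
          (∏ j, w j.1 (σ j)) * ∑ x, Φ ((Equiv.piSplitAt i β).symm (x, σ)) * w i x := by
  rw [← (Equiv.piSplitAt i β).symm.sum_comp, Fintype.sum_prod_type_right]
  refine sum_congr rfl fun σ _ => ?_
  rw [mul_sum]
  refine sum_congr rfl fun x _ => ?_
  have hprod : ∏ j, w j ((Equiv.piSplitAt i β).symm (x, σ) j)
      = w i x * ∏ j : {j // j ≠ i}, w j (σ j) := by
    rw [Fintype.prod_eq_mul_prod_subtype_ne _ i]
    congr 1
    · simp
    · exact prod_congr rfl fun j _ => by simp [j.2]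
  rw [hprod]
  ring

variable [PartialOrder R] [IsOrderedRing R]

theorem sum_mul_prod_le_sum_mul_prod_update {w : ∀ i, β i → R} {i : ι}
    (hw : ∀ j ≠ i, ∀ x, 0 ≤ w j x) {Φ : (∀ i, β i) → R} {v : β i → R}
    (h : ∀ τ, ∑ x, Φ (Function.update τ i x) * w i x ≤ ∑ x, Φ (Function.update τ i x) * v x) :
    ∑ τ, Φ τ * ∏ j, w j (τ j) ≤ ∑ τ, Φ τ * ∏ j, Function.update w i v j (τ j) := by
  rw [sum_mul_prod_eq_sum_piSplitAt _ _ i, sum_mul_prod_eq_sum_piSplitAt _ _ i]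
  refine sum_le_sum fun σ _ => ?_
  have hrest : ∏ j : {j // j ≠ i}, Function.update w i v j (σ j)
      = ∏ j : {j // j ≠ i}, w j (σ j) :=
    prod_congr rfl fun j _ => by rw [Function.update_of_ne j.2]
  rw [hrest, Function.update_self]
  refine mul_le_mul_of_nonneg_left ?_ (prod_nonneg fun j _ => hw j j.2 _)
  obtain _ | ⟨⟨y⟩⟩ := isEmpty_or_nonempty (β i)
  · simp
  · simpa only [update_piSplitAt_symm] using h ((Equiv.piSplitAt i β).symm (y, σ))

theorem sum_mul_prod_le_sum_mul_prod {w w' : ∀ i, β i → R} (hw : ∀ i x, 0 ≤ w i x)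
    (hw' : ∀ i x, 0 ≤ w' i x) {Φ : (∀ i, β i) → R}
    (h : ∀ i τ, ∑ x, Φ (Function.update τ i x) * w i x
      ≤ ∑ x, Φ (Function.update τ i x) * w' i x) :
    ∑ τ, Φ τ * ∏ i, w i (τ i) ≤ ∑ τ, Φ τ * ∏ i, w' i (τ i) := by
  suffices hybrid : ∀ s : Finset ι,
      ∑ τ, Φ τ * ∏ i, w i (τ i) ≤ ∑ τ, Φ τ * ∏ i, s.piecewise w' w i (τ i) by
    simpa using hybrid univ
  intro s
  induction s using Finset.induction_on with
  | empty => simp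
  | insert i s hi ih =>
    refine ih.trans ?_
    rw [piecewise_insert]
    refine sum_mul_prod_le_sum_mul_prod_update (fun j _ x => ?_) fun τ => ?_
    · exact piecewise_cases s w' w (fun u => 0 ≤ u x) (hw' j x) (hw j x)
    · rw [piecewise_eq_of_notMem _ _ _ hi]
      exact h i τ

end ProductWeights

/-- Chebyshev's association inequality for a random variable taking two values, with probabilities
`p` and `q`. -/
theorem prod_convexComb_le {ι R : Type*} [CommRing R] [PartialOrder R] [IsOrderedRing R]
    {p q : R} (hp : 0 ≤ p) (hq : 0 ≤ q) (hpq : p + q = 1)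
    (s : Finset ι) {a b : ι → R} (ha : ∀ i ∈ s, 0 ≤ a i) (hab : ∀ i ∈ s, a i ≤ b i) :
    ∏ i ∈ s, (p * b i + q * a i) ≤ p * ∏ i ∈ s, b i + q * ∏ i ∈ s, a i := by
  classical
  induction s using Finset.induction_on with
  | empty => simp [hpq]
  | insert i s hi ih =>
    simp only [prod_insert hi]
    simp only [mem_insert, forall_eq_or_imp] at ha hab
    have hb : 0 ≤ b i := ha.1.trans hab.1
    set A := ∏ i ∈ s, a i
    set B := ∏ i ∈ s, b i
    have hAB : A ≤ B := prod_le_prod ha.2 hab.2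
    calc (p * b i + q * a i) * ∏ i ∈ s, (p * b i + q * a i)
        ≤ (p * b i + q * a i) * (p * B + q * A) :=
          mul_le_mul_of_nonneg_left (ih ha.2 hab.2)
            (add_nonneg (mul_nonneg hp hb) (mul_nonneg hq ha.1))
      _ = p * p * (b i * B) + q * q * (a i * A) + p * q * (a i * B + b i * A) := by ring
      _ ≤ p * p * (b i * B) + q * q * (a i * A) + p * q * (a i * A + b i * B) := by
          gcongr _ + p * q * ?_
          exact mul_add_mul_le_mul_add_mul hab.1 hAB
      _ = (p + q) * (p * (b i * B) + q * (a i * A)) := by ring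
      _ = p * (b i * B) + q * (a i * A) := by rw [hpq, one_mul]

section Refinement

variable {α : Type*} [DecidableEq α] {s : Finset α} {P Q : Finpartition s}

theorem prod_prod_parts {R : Type*} [CommMonoid R] (P : Finpartition s) (f : α → R) :
    ∏ M ∈ P.parts, ∏ x ∈ M, f x = ∏ x ∈ s, f x := by
  conv_rhs => rw [← P.biUnion_parts, prod_biUnion P.disjoint]
  rfl

theorem biUnion_parts_filter_subset (hPQ : P ≤ Q) {N : Finset α} (hN : N ∈ Q.parts) :
    {M ∈ P.parts | M ⊆ N}.biUnion id = N := by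
  ext x
  simp only [mem_biUnion, mem_filter, id]
  refine ⟨fun ⟨M, hM, hx⟩ => hM.2 hx, fun hx => ?_⟩
  obtain ⟨M, hM, hxM⟩ := P.exists_mem (Q.subset hN hx)
  obtain ⟨N', hN', hMN'⟩ := hPQ hM
  obtain rfl := Q.eq_of_mem_parts hN hN' hx (hMN' hxM)
  exact ⟨M, ⟨hM, hMN'⟩, hxM⟩

theorem prod_prod_parts_filter_subset {R : Type*} [CommMonoid R] (hPQ : P ≤ Q)
    (f : Finset α → R) :
    ∏ N ∈ Q.parts, ∏ M ∈ P.parts with M ⊆ N, f M = ∏ M ∈ P.parts, f M := by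
  rw [prod_comm' (t' := P.parts) (s' := fun M => {N ∈ Q.parts | M ⊆ N})
    (by simp only [mem_filter]; tauto)]
  refine prod_congr rfl fun M hM => ?_
  obtain ⟨N, hN, hMN⟩ := hPQ hM
  obtain ⟨x, hx⟩ := P.nonempty_of_mem_parts hM
  have hsingleton : {N ∈ Q.parts | M ⊆ N} = {N} := by
    refine eq_singleton_iff_unique_mem.2 ⟨mem_filter.2 ⟨hN, hMN⟩, fun N' hN' => ?_⟩
    obtain ⟨hN', hMN'⟩ := mem_filter.1 hN'
    exact Q.eq_of_mem_parts hN' hN (hMN' hx) (hMN hx)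
  rw [hsingleton, prod_singleton]

theorem prod_parts_convexComb_le_of_le {R : Type*} [CommRing R] [PartialOrder R]
    [IsOrderedRing R] (hPQ : P ≤ Q) {p q : R} (hp : 0 ≤ p)
    (hq : 0 ≤ q) (hpq : p + q = 1) {a b : α → R} (ha : ∀ x, 0 ≤ a x) (hab : ∀ x, a x ≤ b x) :
    ∏ M ∈ P.parts, (p * ∏ x ∈ M, b x + q * ∏ x ∈ M, a x)
      ≤ ∏ N ∈ Q.parts, (p * ∏ x ∈ N, b x + q * ∏ x ∈ N, a x) := by
  have hb x : 0 ≤ b x := (ha x).trans (hab x)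
  rw [← prod_prod_parts_filter_subset hPQ]
  refine prod_le_prod (fun N _ => prod_nonneg fun M _ => ?_) fun N hN => ?_
  · exact add_nonneg (mul_nonneg hp (prod_nonneg fun x _ => hb x))
      (mul_nonneg hq (prod_nonneg fun x _ => ha x))
  · have hsplit (c : α → R) : ∏ x ∈ N, c x = ∏ M ∈ P.parts with M ⊆ N, ∏ x ∈ M, c x := by
      conv_lhs => rw [← biUnion_parts_filter_subset hPQ hN]
      exact prod_biUnion (P.disjoint.subset (coe_subset.2 (filter_subset _ _)))
    rw [hsplit a, hsplit b]
    exact prod_convexComb_le hp hq hpq _ (fun M _ => prod_nonneg fun x _ => ha x)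
      fun M _ => prod_le_prod (fun x _ => ha x) fun x _ => hab x

theorem mem_biUnion_id_iff_of_mem_parts {C : Finset (Finset α)} (hC : C ⊆ P.parts)
    {M : Finset α} (hM : M ∈ P.parts) {x : α} (hx : x ∈ M) : x ∈ C.biUnion id ↔ M ∈ C := by
  refine ⟨fun h => ?_, fun h => mem_biUnion.2 ⟨M, h, hx⟩⟩
  obtain ⟨N, hN, hxN⟩ := mem_biUnion.1 h
  rwa [P.eq_of_mem_parts hM (hC hN) hx hxN]

theorem injOn_biUnion_id_powerset_parts (P : Finpartition s) :
    Set.InjOn (fun C : Finset (Finset α) => C.biUnion id) P.parts.powerset := by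
  intro C hC D hD hCD
  rw [mem_coe, mem_powerset] at hC hD
  ext M
  by_cases hM : M ∈ P.parts
  · obtain ⟨x, hx⟩ := P.nonempty_of_mem_parts hM
    rw [← mem_biUnion_id_iff_of_mem_parts hC hM hx, ← mem_biUnion_id_iff_of_mem_parts hD hM hx]
    exact Finset.ext_iff.1 hCD x
  · exact iff_of_false (fun h => hM (hC h)) fun h => hM (hD h)

theorem prod_ite_mem_biUnion_id {R : Type*} [CommMonoid R] {C : Finset (Finset α)}
    (hC : C ⊆ P.parts) (a b : α → R) :
    (∏ x ∈ s, if x ∈ C.biUnion id then b x else a x)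
      = (∏ M ∈ C, ∏ x ∈ M, b x) * ∏ M ∈ P.parts \ C, ∏ x ∈ M, a x := by
  rw [← prod_prod_parts P, ← prod_sdiff hC, mul_comm]
  congr 1
  · refine prod_congr rfl fun M hM => prod_congr rfl fun x hx => if_pos ?_
    exact (mem_biUnion_id_iff_of_mem_parts hC (hC hM) hx).2 hM
  · refine prod_congr rfl fun M hM => prod_congr rfl fun x hx => if_neg ?_
    obtain ⟨hM, hMC⟩ := mem_sdiff.1 hM
    exact mt (mem_biUnion_id_iff_of_mem_parts hC hM hx).1 hMC

end Refinement

section PartMeasure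

variable {n : ℕ} {P Q : Finpartition (univ : Finset (Fin n))} {p : ℝ}

theorem partMeasure_nonneg (P : Finpartition (univ : Finset (Fin n))) (hp0 : 0 ≤ p) (hp1 : p ≤ 1)
    (S : Finset (Fin n)) : 0 ≤ partMeasure P p S := by
  refine prod_nonneg fun M _ => ?_
  unfold blockWeight
  split_ifs
  exacts [hp0, sub_nonneg.2 hp1, le_rfl]

theorem biUnion_id_filter_subset_of_partMeasure_ne_zero {S : Finset (Fin n)}
    (hS : partMeasure P p S ≠ 0) : {M ∈ P.parts | M ⊆ S}.biUnion id = S := by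
  ext l
  simp only [mem_biUnion, mem_filter, id]
  refine ⟨fun ⟨M, hM, hl⟩ => hM.2 hl, fun hl => ?_⟩
  obtain ⟨M, hM, hlM⟩ := P.exists_mem (mem_univ l)
  refine ⟨M, ⟨hM, ?_⟩, hlM⟩
  by_contra hMS
  refine prod_ne_zero_iff.1 hS M hM ?_
  rw [blockWeight, if_neg hMS, if_neg (ne_empty_of_mem (mem_inter.2 ⟨hlM, hl⟩))]

theorem blockWeight_biUnion_id {C : Finset (Finset (Fin n))} (hC : C ⊆ P.parts)
    {M : Finset (Fin n)} (hM : M ∈ P.parts) :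
    blockWeight p M (C.biUnion id) = if M ∈ C then p else 1 - p := by
  have hmem {l : Fin n} (hl : l ∈ M) := mem_biUnion_id_iff_of_mem_parts hC hM hl
  obtain ⟨l, hl⟩ := P.nonempty_of_mem_parts hM
  have hsubset : M ⊆ C.biUnion id ↔ M ∈ C :=
    ⟨fun h => (hmem hl).1 (h hl), fun h _ hx => (hmem hx).2 h⟩
  rw [blockWeight, if_congr hsubset rfl rfl]
  refine if_ctx_congr Iff.rfl (fun _ => rfl) fun hMC => if_pos ?_
  rw [← disjoint_iff_inter_eq_empty, disjoint_left]
  exact fun _ hx => mt (hmem hx).1 hMC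

theorem partMeasure_biUnion_id {C : Finset (Finset (Fin n))} (hC : C ⊆ P.parts) :
    partMeasure P p (C.biUnion id) = p ^ #C * (1 - p) ^ #(P.parts \ C) := by
  rw [partMeasure, ← prod_sdiff hC, mul_comm, ← prod_const, ← prod_const]
  congr 1
  · exact prod_congr rfl fun M hM => by rw [blockWeight_biUnion_id hC (hC hM), if_pos hM]
  · refine prod_congr rfl fun M hM => ?_
    obtain ⟨hM, hMC⟩ := mem_sdiff.1 hM
    rw [blockWeight_biUnion_id hC hM, if_neg hMC]

theorem sum_mul_partMeasure (P : Finpartition (univ : Finset (Fin n))) (p : ℝ)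
    (g : Finset (Fin n) → ℝ) :
    ∑ S, g S * partMeasure P p S
      = ∑ C ∈ P.parts.powerset, g (C.biUnion id) * (p ^ #C * (1 - p) ^ #(P.parts \ C)) := by
  symm
  refine sum_of_injOn _ (injOn_biUnion_id_powerset_parts P) (fun _ _ => mem_coe.2 (mem_univ _))
    (fun S _ hS => ?_) fun C hC => ?_
  · by_contra hne
    exact hS ⟨{M ∈ P.parts | M ⊆ S}, mem_coe.2 (mem_powerset.2 (filter_subset _ _)),
      biUnion_id_filter_subset_of_partMeasure_ne_zero (right_ne_zero_of_mul hne)⟩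
  · rw [partMeasure_biUnion_id (mem_powerset.1 hC)]

theorem sum_prod_ite_mem_mul_partMeasure (P : Finpartition (univ : Finset (Fin n))) (p : ℝ)
    (a b : Fin n → ℝ) :
    ∑ S, (∏ l, if l ∈ S then b l else a l) * partMeasure P p S
      = ∏ M ∈ P.parts, (p * ∏ l ∈ M, b l + (1 - p) * ∏ l ∈ M, a l) := by
  rw [sum_mul_partMeasure, prod_add]
  refine sum_congr rfl fun C hC => ?_
  rw [prod_ite_mem_biUnion_id (mem_powerset.1 hC)]
  simp only [prod_mul_distrib, prod_const]
  ring

theorem sum_prod_ite_mem_mul_partMeasure_le_of_le (hPQ : P ≤ Q) (hp0 : 0 ≤ p) (hp1 : p ≤ 1)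
    {a b : Fin n → ℝ} (ha : ∀ l, 0 ≤ a l) (hb : ∀ l, 0 ≤ b l)
    (hab : (∀ l, a l ≤ b l) ∨ ∀ l, b l ≤ a l) :
    ∑ S, (∏ l, if l ∈ S then b l else a l) * partMeasure P p S
      ≤ ∑ S, (∏ l, if l ∈ S then b l else a l) * partMeasure Q p S := by
  have hq : 0 ≤ 1 - p := sub_nonneg.2 hp1
  rw [sum_prod_ite_mem_mul_partMeasure, sum_prod_ite_mem_mul_partMeasure]
  rcases hab with hab | hba
  · exact prod_parts_convexComb_le_of_le hPQ hp0 hq (add_sub_cancel p 1) ha hab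
  · simpa only [add_comm] using
      prod_parts_convexComb_le_of_le hPQ hq hp0 (sub_add_cancel 1 p) hb hba

end PartMeasure

section Schedule

variable {m n : ℕ}

theorem schedExp_eq_sum_pi (Sch : Fin m → Finpartition (univ : Finset (Fin n)))
    (p : Fin m → ℝ) (F : Fin n → Finset (Fin m) → ℝ) :
    schedExp Sch p F = ∑ τ : Fin m → Finset (Fin n),
      (∏ l, F l {h | l ∈ τ h}) * ∏ h, partMeasure (Sch h) (p h) (τ h) := by
  refine sum_nbij' (fun T h => Lh h T) (fun τ => univ.filter fun x => x.2 ∈ τ x.1)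
    (fun _ _ => mem_univ _) (fun _ _ => mem_univ _) (fun T _ => ?_) (fun τ _ => ?_) fun T _ => ?_
  · ext x
    simp [Lh]
  · ext h l
    simp [Lh]
  · simp [Lh, Hl, schedMeasure]

theorem filter_mem_update {ι α : Type*} [Fintype ι] [DecidableEq ι] [DecidableEq α]
    (τ : ι → Finset α) (i : ι) (S : Finset α) (x : α) :
    ({j | x ∈ Function.update τ i S j} : Finset ι)
      = if x ∈ S then insert i (({j | x ∈ τ j} : Finset ι).erase i)
        else ({j | x ∈ τ j} : Finset ι).erase i := by
  ext j
  obtain rfl | hj := eq_or_ne j i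
  · split_ifs with hx <;> simp [hx]
  · split_ifs <;> simp [hj]

theorem sweep_prob_coarser_schedule_le_general {F : Fin n → Finset (Fin m) → ℝ}
    (hF0 : ∀ l S, 0 ≤ F l S) (hF : Aligned F) {p : Fin m → ℝ} (hp : ∀ h, 0 ≤ p h ∧ p h ≤ 1)
    {Sch Sch' : Fin m → Finpartition (univ : Finset (Fin n))} (hcoarser : Coarser Sch' Sch) :
    schedExp Sch p F ≤ schedExp Sch' p F := by
  rw [schedExp_eq_sum_pi, schedExp_eq_sum_pi]
  refine sum_mul_prod_le_sum_mul_prod (fun h => partMeasure_nonneg _ (hp h).1 (hp h).2)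
    (fun h => partMeasure_nonneg _ (hp h).1 (hp h).2) fun h τ => ?_
  simp only [filter_mem_update, apply_ite (F _)]
  exact sum_prod_ite_mem_mul_partMeasure_le_of_le (hcoarser h) (hp h).1 (hp h).2
    (fun l => hF0 l _) (fun l => hF0 l _)
    ((hF h).imp (fun hInc l => hInc l _) fun hDec l => hDec l _)

end Schedule

/-- Theorem C for a fixed party `s`: if each voter always votes for their own party,
each win-probability function `F l` is increasing at supporters of `s` and decreasing
at supporters of rival parties, then a coarser staggered polling schedule increases the
probability that party `s` sweeps all the elections. -/
theorem sweep_prob_coarser_schedule_le {m n : ℕ} {P : Type*} [Fintype P]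
    (t : Fin m → P) (s : P)
    (F : Fin n → Finset (Fin m) → ℝ)
    (hF01 : ∀ l S, 0 ≤ F l S ∧ F l S ≤ 1)
    (hInc : ∀ l (h : Fin m), t h = s → IncreasingAt (F l) h)
    (hDec : ∀ l (h : Fin m), t h ≠ s → DecreasingAt (F l) h)
    (p : Fin m → ℝ) (hp : ∀ h, 0 ≤ p h ∧ p h ≤ 1)
    (Sch Sch' : Fin m → Finpartition (univ : Finset (Fin n)))
    (hcoarser : Coarser Sch' Sch) :
    schedExp Sch p F ≤ schedExp Sch' p F :=
  sweep_prob_coarser_schedule_le_general (fun l S => (hF01 l S).1)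
    (fun h => (eq_or_ne (t h) s).imp (fun ht l => hInc l h ht) fun ht l => hDec l h ht) hp hcoarser
end

section
/- In the two-party, two-election model with presidential win-probability function f and parliamentary win-probability function g, the probability that party a sweeps both elections is at least as large when the elections are held simultaneously as when they are held on separate dates: Σ_{S ⊆ H} μ_p(S)·f(S)·g(S) ≥ (Σ_{S ⊆ H} μ_p(S)·f(S))·(Σ_{S ⊆ H} μ_p(S)·g(S)). -/
open Finset

/-- Presidential win-probability for party `a` (with supporter set `A`) given
turnout `S`: win on a strict majority of cast votes, ties broken by a fair coin. -/
noncomputable def presWin {m : ℕ} (A : Finset (Fin m)) (S : Finset (Fin m)) : ℝ :=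
  if (S \ A).card < (S ∩ A).card then 1
  else if (S ∩ A).card = (S \ A).card then 1 / 2 else 0

/-- Probability that party `a` is awarded district `D` given turnout `S`. -/
noncomputable def distWin {m : ℕ} (A D S : Finset (Fin m)) : ℝ :=
  if ((S ∩ D) \ A).card < (S ∩ A ∩ D).card then 1
  else if (S ∩ A ∩ D).card = ((S ∩ D) \ A).card then 1 / 2 else 0

/-- Probability of winning parliament given `w` districts out of `k`:  a strict
majority of the districts wins, an exact tie is broken by a fair coin. -/
noncomputable def majOf (k w : ℕ) : ℝ :=
  if k < 2 * w then 1 else if 2 * w = k then 1 / 2 else 0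

/-- Parliamentary win-probability for party `a` (supporter set `A`, districts `D`)
given turnout `S`: each district is awarded independently with probability
`distWin A (D j) S`, and party `a` wins parliament on a majority of districts. -/
noncomputable def parlWin {m k : ℕ} (A : Finset (Fin m)) (D : Fin k → Finset (Fin m))
    (S : Finset (Fin m)) : ℝ :=
  ∑ W : Finset (Fin k),
    (∏ j ∈ W, distWin A (D j) S) * (∏ j ∈ Wᶜ, (1 - distWin A (D j) S)) * majOf k W.card

/-! Reorder the turnouts so that going up means gaining supporters of `a` and losing opponents.
Toggling the opponents' attendance, `T ↦ T ∆ Aᶜ`, turns this order into inclusion and each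
opponent's turnout probability `p h` into `1 - p h`, so the turnout law stays a product Bernoulli
measure and monotone functions of the turnout are positively correlated by the
Fortuin–Kasteleyn–Ginibre inequality. The parliamentary win-probability is monotone because,
conditionally on the turnout, the set of districts won is itself a product Bernoulli set whose
parameters are monotone, and Holley's inequality applies to it. -/

open scoped symmDiff

section ProductBernoulli

variable {n : ℕ} {p q : Fin n → ℝ}

lemma bern_eq_prod_piecewise (p : Fin n → ℝ) (S : Finset (Fin n)) :
    bern p S = ∏ h, S.piecewise p (1 - p) h := by
  rw [prod_piecewise, univ_inter, ← compl_eq_univ_sdiff]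
  rfl

lemma sum_bern (p : Fin n → ℝ) : ∑ S, bern p S = 1 := by
  simp only [bern, ← Fintype.prod_add, add_sub_cancel, prod_const_one]

lemma sum_bern_mul_sub_const (p : Fin n → ℝ) (f : Finset (Fin n) → ℝ) (c : ℝ) :
    ∑ S, bern p S * (f S - c) = ∑ S, bern p S * f S - c := by
  simp only [mul_sub, sum_sub_distrib, ← sum_mul, sum_bern, one_mul]

lemma bern_nonneg (hp₀ : 0 ≤ p) (hp₁ : p ≤ 1) (S : Finset (Fin n)) : 0 ≤ bern p S :=
  mul_nonneg (prod_nonneg fun h _ => hp₀ h) (prod_nonneg fun h _ => sub_nonneg.2 (hp₁ h))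

lemma bern_mul_bern_le_bern_inf_mul_bern_sup (hp₀ : 0 ≤ p) (hpq : p ≤ q) (hq₁ : q ≤ 1)
    (S T : Finset (Fin n)) :
    bern p S * bern q T ≤ bern p (S ⊓ T) * bern q (S ⊔ T) := by
  have factor_nonneg : ∀ {r : Fin n → ℝ}, 0 ≤ r → r ≤ 1 → ∀ U : Finset (Fin n),
      0 ≤ U.piecewise r (1 - r) := fun hr₀ hr₁ U =>
    U.le_piecewise_of_le_of_le hr₀ (sub_nonneg.2 hr₁)
  simp only [bern_eq_prod_piecewise, ← prod_mul_distrib]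
  refine prod_le_prod (fun h _ => mul_nonneg (factor_nonneg hp₀ (hpq.trans hq₁) S h)
    (factor_nonneg (hp₀.trans hpq) hq₁ T h)) fun h _ => ?_
  -- The two factors agree unless `h ∈ S \ T`.
  have factor_le : p h * (1 - q h) ≤ (1 - p h) * q h := by linarith [hpq h]
  by_cases hS : h ∈ S <;> by_cases hT : h ∈ T <;> simp [hS, hT, factor_le]

lemma sum_bern_mul_le_sum_bern_mul (hp₀ : 0 ≤ p) (hpq : p ≤ q) (hq₁ : q ≤ 1)
    {f : Finset (Fin n) → ℝ} (hf : Monotone f) :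
    ∑ S, bern p S * f S ≤ ∑ S, bern q S * f S := by
  -- Holley's inequality needs a nonnegative function, so apply it to `f - f ∅`.
  have holley_shifted := holley (bern p) (bern q) (fun S => f S - f ∅)
    (fun S => sub_nonneg.2 (hf S.empty_subset))
    (bern_nonneg hp₀ (hpq.trans hq₁)) (bern_nonneg (hp₀.trans hpq) hq₁)
    (fun S T hST => sub_le_sub_right (hf hST) _) ((sum_bern p).trans (sum_bern q).symm)
    (bern_mul_bern_le_bern_inf_mul_bern_sup hp₀ hpq hq₁)
  simp only [mul_comm (_ - _), sum_bern_mul_sub_const] at holley_shifted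
  exact (sub_le_sub_iff_right _).1 holley_shifted

lemma sum_bern_mul_mul_sum_bern_mul_le (hp₀ : 0 ≤ p) (hp₁ : p ≤ 1)
    {f g : Finset (Fin n) → ℝ} (hf : Monotone f) (hg : Monotone g) :
    (∑ S, bern p S * f S) * ∑ S, bern p S * g S ≤ ∑ S, bern p S * f S * g S := by
  -- The FKG inequality needs nonnegative functions, so apply it to `f - f ∅` and `g - g ∅`.
  have fkg_shifted := fkg (fun S => f S - f ∅) (fun S => g S - g ∅) (bern p)
    (bern_nonneg hp₀ hp₁) (fun S => sub_nonneg.2 (hf S.empty_subset))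
    (fun S => sub_nonneg.2 (hg S.empty_subset)) (fun S T hST => sub_le_sub_right (hf hST) _)
    (fun S T hST => sub_le_sub_right (hg hST) _)
    (bern_mul_bern_le_bern_inf_mul_bern_sup hp₀ le_rfl hp₁)
  have sum_product : ∑ S, bern p S * ((f S - f ∅) * (g S - g ∅)) =
      ∑ S, bern p S * f S * g S - f ∅ * ∑ S, bern p S * g S
        - g ∅ * (∑ S, bern p S * f S - f ∅) := by
    rw [← sum_bern_mul_sub_const, mul_sum, mul_sum, ← sum_sub_distrib, ← sum_sub_distrib]
    exact sum_congr rfl fun S _ => by ring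
  rw [sum_bern, one_mul, sum_product, sum_bern_mul_sub_const, sum_bern_mul_sub_const]
    at fkg_shifted
  linarith

lemma bern_symmDiff (p : Fin n → ℝ) (B T : Finset (Fin n)) :
    bern p (T ∆ B) = bern (B.piecewise (1 - p) p) T := by
  simp only [bern_eq_prod_piecewise]
  refine prod_congr rfl fun h _ => ?_
  by_cases hB : h ∈ B <;> by_cases hT : h ∈ T <;> simp [mem_symmDiff, hB, hT]

lemma sum_bern_mul_eq_sum_bern_piecewise_mul (p : Fin n → ℝ) (B : Finset (Fin n))
    (f : Finset (Fin n) → ℝ) :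
    ∑ S, bern p S * f S = ∑ T, bern (B.piecewise (1 - p) p) T * f (T ∆ B) := by
  simp only [← bern_symmDiff]
  exact ((symmDiff_left_involutive B).bijective.sum_comp fun S => bern p S * f S).symm

end ProductBernoulli

section SupportMonotone

/-- A function of the turnout is support-monotone for the supporter set `A` if it weakly increases
whenever supporters are added to the turnout and opponents are removed from it. It is the common
property of all win-probabilities of the party supported by `A`. -/
def SupportMonotone {α β : Type*} [DecidableEq α] [LE β] (A : Finset α) (f : Finset α → β) :
    Prop :=
  ∀ ⦃S T : Finset α⦄, S ∩ A ⊆ T ∩ A → T \ A ⊆ S \ A → f S ≤ f T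

lemma SupportMonotone.monotone_symmDiff_compl {α β : Type*} [Fintype α] [DecidableEq α]
    [Preorder β] {A : Finset α} {f : Finset α → β} (hf : SupportMonotone A f) :
    Monotone fun T => f (T ∆ Aᶜ) := by
  intro S T hST
  apply hf <;> intro h <;> have := @hST h <;>
    simp only [mem_inter, mem_sdiff, mem_symmDiff, mem_compl] <;> tauto

end SupportMonotone

section Majority

/-- The probability that `x` beats `y` under majority rule with ties decided by a fair coin. By
definition `presWin` and `distWin` compare vote counts in this way, and `majOf k w` compares `2 * w`
with `k`. -/
noncomputable def majority {α : Type*} [LinearOrder α] (x y : α) : ℝ :=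
  if y < x then 1 else if x = y then 1 / 2 else 0

lemma majority_nonneg {α : Type*} [LinearOrder α] (x y : α) : 0 ≤ majority x y := by
  unfold majority; split_ifs <;> norm_num

lemma majority_le_one {α : Type*} [LinearOrder α] (x y : α) : majority x y ≤ 1 := by
  unfold majority; split_ifs <;> norm_num

lemma majority_le_majority {α : Type*} [LinearOrder α] {x x' y y' : α} (hx : x ≤ x')
    (hy : y' ≤ y) : majority x y ≤ majority x' y' := by
  unfold majority
  split_ifs <;> grind

lemma majOf_mono (k : ℕ) : Monotone (majOf k) := fun _ _ hvw =>
  majority_le_majority (Nat.mul_le_mul_left 2 hvw) le_rfl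

variable {m : ℕ}

lemma distWin_nonneg (A D S : Finset (Fin m)) : 0 ≤ distWin A D S := majority_nonneg _ _

lemma distWin_le_one (A D S : Finset (Fin m)) : distWin A D S ≤ 1 := majority_le_one _ _

lemma supportMonotone_presWin (A : Finset (Fin m)) : SupportMonotone A (presWin A) :=
  fun _ _ hA hB => majority_le_majority (card_le_card hA) (card_le_card hB)

lemma supportMonotone_distWin (A D : Finset (Fin m)) : SupportMonotone A (distWin A D) := by
  intro S T hA hB
  refine majority_le_majority (card_le_card (inter_subset_inter_right hA)) (card_le_card ?_)
  simp only [inter_comm _ D, inter_sdiff_assoc]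
  exact inter_subset_inter_left hB

lemma supportMonotone_parlWin {k : ℕ} (A : Finset (Fin m)) (D : Fin k → Finset (Fin m)) :
    SupportMonotone A (parlWin A D) := fun S T hA hB =>
  sum_bern_mul_le_sum_bern_mul (p := fun j => distWin A (D j) S) (q := fun j => distWin A (D j) T)
    (fun j => distWin_nonneg A (D j) S) (fun j => supportMonotone_distWin A (D j) hA hB)
    (fun j => distWin_le_one A (D j) T) ((majOf_mono k).comp card_mono)

end Majority

theorem simultaneous_sweep_ge_general {m : ℕ} {A : Finset (Fin m)} {p : Fin m → ℝ}
    (hp₀ : 0 ≤ p) (hp₁ : p ≤ 1) {f g : Finset (Fin m) → ℝ}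
    (hf : SupportMonotone A f) (hg : SupportMonotone A g) :
    (∑ S, bern p S * f S) * ∑ S, bern p S * g S ≤ ∑ S, bern p S * f S * g S := by
  have toggled_nonneg : 0 ≤ Aᶜ.piecewise (1 - p) p :=
    Aᶜ.le_piecewise_of_le_of_le (sub_nonneg.2 hp₁) hp₀
  have toggled_le_one : Aᶜ.piecewise (1 - p) p ≤ 1 :=
    Aᶜ.piecewise_le_of_le_of_le (sub_le_self 1 hp₀) hp₁
  have toggled := sum_bern_mul_mul_sum_bern_mul_le toggled_nonneg toggled_le_one
    hf.monotone_symmDiff_compl hg.monotone_symmDiff_compl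
  simp only [mul_assoc] at toggled ⊢
  rwa [sum_bern_mul_eq_sum_bern_piecewise_mul p Aᶜ f,
    sum_bern_mul_eq_sum_bern_piecewise_mul p Aᶜ g,
    sum_bern_mul_eq_sum_bern_piecewise_mul p Aᶜ fun S => f S * g S]

/-- In the two-party, two-election model, the probability that party `a` sweeps both
the presidential and the parliamentary election is at least as large when the two
elections are held simultaneously as when they are held on separate dates. -/
theorem simultaneous_sweep_ge {m k : ℕ} (A : Finset (Fin m))
    (D : Fin k → Finset (Fin m)) (hD : ∀ h : Fin m, ∃! j, h ∈ D j)
    (p : Fin m → ℝ) (hp : ∀ h, 0 ≤ p h ∧ p h ≤ 1) :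
    (∑ S : Finset (Fin m), bern p S * presWin A S) *
      (∑ S : Finset (Fin m), bern p S * parlWin A D S) ≤
    ∑ S : Finset (Fin m), bern p S * presWin A S * parlWin A D S :=
  simultaneous_sweep_ge_general (fun h => (hp h).1) (fun h => (hp h).2)
    (supportMonotone_presWin A) (supportMonotone_parlWin A D)
end
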